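/- Let 0 < m < M, let f : [m,M] → ℝ be continuous and concave, and either increasing or decreasing on [m,M]. Let A be a bounded self-adjoint operator on a complex Hilbert space H with mI ≤ A ≤ MI, and let φ : B(H) → B(K) be a normalized positive linear map. Then for any t₀ ∈ (m,M) at which f is differentiable with f′(t₀) ≠ 0, one has φ(f(A)) ≥ α(f,t₀) · f(φ(A)) + β(f,t₀)·I and f(φ(A)) ≥ α(f,t₀) · φ(f(A)) + β(f,t₀)·I. -/

import Mathlib

/-!
On `[m, M]` the concave function `f` lies above its chord, `a t + b ≤ f t`
(`chord_le_of_concaveOn`), and below its tangent at `t₀` (`le_tangent_of_concaveOn`). Monotonicity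
makes `a` and `f' t₀` have the same sign, so `α = a / f' t₀ ≥ 0`; multiplying the tangent inequality
by `α` turns it into `α f t + β ≤ a t + b`, since `α f' t₀ = a`. Thus
`α f + β ≤ (the chord) ≤ f` on `[m, M]`.

By the continuous functional calculus the same two inequalities hold for `A` and for `φ A`, both of
which have spectrum in `[m, M]` (`cfc_chord_bounds`). Since `φ` is linear and unital,
`φ (a • A + b • 1) = a • φ A + b • 1`; as `φ` preserves order, both claims follow by comparing each
side with this operator.
-/

noncomputable def chordSlope (m M : ℝ) (f : ℝ → ℝ) : ℝ := (f M - f m) / (M - m)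

noncomputable def chordIntercept (m M : ℝ) (f : ℝ → ℝ) : ℝ := (M * f m - m * f M) / (M - m)

/-- `α(f,t₀) = a_f / f′(t₀)`. -/
noncomputable def mpAlpha (m M : ℝ) (f : ℝ → ℝ) (t₀ : ℝ) : ℝ :=
  chordSlope m M f / deriv f t₀

/-- `β(f,t₀) = a_f·t₀ + b_f − a_f·f(t₀)/f′(t₀)`. -/
noncomputable def mpBeta (m M : ℝ) (f : ℝ → ℝ) (t₀ : ℝ) : ℝ :=
  chordSlope m M f * t₀ + chordIntercept m M f - chordSlope m M f * f t₀ / deriv f t₀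

theorem chord_le_of_concaveOn {m M : ℝ} (hmM : m < M) {f : ℝ → ℝ}
    (hf : ConcaveOn ℝ (Set.Icc m M) f) {t : ℝ} (ht : t ∈ Set.Icc m M) :
    chordSlope m M f * t + chordIntercept m M f ≤ f t := by
  have hpos : 0 < M - m := sub_pos.2 hmM
  have h := hf.2 (Set.left_mem_Icc.2 hmM.le) (Set.right_mem_Icc.2 hmM.le)
    (div_nonneg (sub_nonneg.2 ht.2) hpos.le) (div_nonneg (sub_nonneg.2 ht.1) hpos.le)
    (by field_simp; ring)
  simp only [smul_eq_mul] at h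
  have e : (M - t) / (M - m) * m + (t - m) / (M - m) * M = t := by field_simp; ring
  rw [e] at h
  refine le_of_eq_of_le ?_ h
  unfold chordSlope chordIntercept
  field_simp
  ring

theorem le_tangent_of_concaveOn {s : Set ℝ} {f : ℝ → ℝ} (hf : ConcaveOn ℝ s f) {t₀ t : ℝ}
    (ht₀ : t₀ ∈ s) (ht : t ∈ s) (hdiff : DifferentiableAt ℝ f t₀) :
    f t ≤ f t₀ + deriv f t₀ * (t - t₀) := by
  rcases lt_trichotomy t t₀ with h | rfl | h
  · have := hf.deriv_le_slope ht ht₀ h hdiff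
    rw [slope_def_field, le_div_iff₀ (sub_pos.2 h)] at this
    linarith
  · simp
  · have := hf.slope_le_deriv ht₀ ht h hdiff
    rw [slope_def_field, div_le_iff₀ (sub_pos.2 h)] at this
    linarith

theorem mpAlpha_nonneg {m M : ℝ} (hmM : m < M) {f : ℝ → ℝ}
    (hf : ConcaveOn ℝ (Set.Icc m M) f)
    (hmono : MonotoneOn f (Set.Icc m M) ∨ AntitoneOn f (Set.Icc m M)) {t₀ : ℝ}
    (ht₀ : t₀ ∈ Set.Ioo m M) (hdiff : DifferentiableAt ℝ f t₀) :
    0 ≤ mpAlpha m M f t₀ := by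
  have h₀ := Set.Ioo_subset_Icc_self ht₀
  have hm := Set.left_mem_Icc.2 hmM.le
  have hM := Set.right_mem_Icc.2 hmM.le
  unfold mpAlpha chordSlope
  -- The sign of `f' t₀` is read off the tangent inequality at one endpoint of the interval.
  rcases hmono with h | h
  · have htan := le_tangent_of_concaveOn hf h₀ hM hdiff
    have hle := h h₀ hM ht₀.2.le
    have hd : 0 ≤ deriv f t₀ :=
      nonneg_of_mul_nonneg_left (by linarith : 0 ≤ deriv f t₀ * (M - t₀)) (sub_pos.2 ht₀.2)
    exact div_nonneg (div_nonneg (sub_nonneg.2 (h hm hM hmM.le)) (sub_pos.2 hmM).le) hd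
  · have htan := le_tangent_of_concaveOn hf h₀ hm hdiff
    have hle := h hm h₀ ht₀.1.le
    have hd : 0 ≤ -deriv f t₀ :=
      nonneg_of_mul_nonneg_left (by linarith : 0 ≤ -deriv f t₀ * (t₀ - m)) (sub_pos.2 ht₀.1)
    exact div_nonneg_of_nonpos
      (div_nonpos_of_nonpos_of_nonneg (sub_nonpos.2 (h hm hM hmM.le)) (sub_pos.2 hmM).le)
      (neg_nonneg.1 hd)

theorem mpAlpha_mul_add_le_chord {m M : ℝ} (hmM : m < M) {f : ℝ → ℝ}
    (hf : ConcaveOn ℝ (Set.Icc m M) f)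
    (hmono : MonotoneOn f (Set.Icc m M) ∨ AntitoneOn f (Set.Icc m M)) {t₀ t : ℝ}
    (ht₀ : t₀ ∈ Set.Ioo m M) (hdiff : DifferentiableAt ℝ f t₀) (hderiv : deriv f t₀ ≠ 0)
    (ht : t ∈ Set.Icc m M) :
    mpAlpha m M f t₀ * f t + mpBeta m M f t₀ ≤ chordSlope m M f * t + chordIntercept m M f := by
  have h := mul_le_mul_of_nonneg_left
    (le_tangent_of_concaveOn hf (Set.Ioo_subset_Icc_self ht₀) ht hdiff)
    (mpAlpha_nonneg hmM hf hmono ht₀ hdiff)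
  have e : mpAlpha m M f t₀ * (f t₀ + deriv f t₀ * (t - t₀)) + mpBeta m M f t₀
      = chordSlope m M f * t + chordIntercept m M f := by
    unfold mpAlpha mpBeta
    field_simp
    ring
  linarith

section Operators

variable {E : Type*} [NormedAddCommGroup E] [InnerProductSpace ℂ E] [CompleteSpace E]

theorem spectrum_subset_Icc_of_le {m M : ℝ} {X : E →L[ℂ] E} (hX : IsSelfAdjoint X)
    (h₁ : m • (1 : E →L[ℂ] E) ≤ X) (h₂ : X ≤ M • (1 : E →L[ℂ] E)) :
    spectrum ℝ X ⊆ Set.Icc m M := by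
  rw [← Algebra.algebraMap_eq_smul_one] at h₁ h₂
  intro x hx
  exact ⟨(algebraMap_le_iff_le_spectrum hX).1 h₁ x hx, (le_algebraMap_iff_spectrum_le hX).1 h₂ x hx⟩

theorem cfc_affine_eq {X : E →L[ℂ] E} (hX : IsSelfAdjoint X) (a b : ℝ) :
    cfc (fun t : ℝ => a * t + b) X = a • X + b • 1 := by
  rw [cfc_add_const b (fun t : ℝ => a * t) X, cfc_const_mul_id a X,
    Algebra.algebraMap_eq_smul_one]

/-- The scalar bounds `α f + β ≤ (chord of f) ≤ f` on `[m, M]`, transferred to an operator with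
spectrum in `[m, M]`. -/
theorem cfc_chord_bounds {m M : ℝ} (hmM : m < M) {f : ℝ → ℝ}
    (hcont : ContinuousOn f (Set.Icc m M)) (hf : ConcaveOn ℝ (Set.Icc m M) f)
    (hmono : MonotoneOn f (Set.Icc m M) ∨ AntitoneOn f (Set.Icc m M)) {t₀ : ℝ}
    (ht₀ : t₀ ∈ Set.Ioo m M) (hdiff : DifferentiableAt ℝ f t₀) (hderiv : deriv f t₀ ≠ 0)
    {X : E →L[ℂ] E} (hX : IsSelfAdjoint X) (hspec : spectrum ℝ X ⊆ Set.Icc m M) :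
    mpAlpha m M f t₀ • cfc f X + mpBeta m M f t₀ • 1
        ≤ chordSlope m M f • X + chordIntercept m M f • 1 ∧
      chordSlope m M f • X + chordIntercept m M f • 1 ≤ cfc f X := by
  have hc : ContinuousOn f (spectrum ℝ X) := hcont.mono hspec
  have e : cfc (fun t => mpAlpha m M f t₀ * f t + mpBeta m M f t₀) X
      = mpAlpha m M f t₀ • cfc f X + mpBeta m M f t₀ • 1 := by
    rw [cfc_add_const (mpBeta m M f t₀) (fun t => mpAlpha m M f t₀ * f t) X,
      cfc_const_mul (mpAlpha m M f t₀) f X, Algebra.algebraMap_eq_smul_one]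
  rw [← e, ← cfc_affine_eq hX]
  exact ⟨cfc_mono fun t ht =>
      mpAlpha_mul_add_le_chord hmM hf hmono ht₀ hdiff hderiv (hspec ht),
    cfc_mono fun t ht => chord_le_of_concaveOn hmM hf (hspec ht)⟩

end Operators

theorem mond_pecaric_concave
    {H K : Type*} [NormedAddCommGroup H] [InnerProductSpace ℂ H] [CompleteSpace H]
    [NormedAddCommGroup K] [InnerProductSpace ℂ K] [CompleteSpace K]
    (m M : ℝ) (hm : 0 < m) (hmM : m < M)
    (f : ℝ → ℝ) (hf_cont : ContinuousOn f (Set.Icc m M))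
    (hf_conc : ConcaveOn ℝ (Set.Icc m M) f)
    (hf_mono : MonotoneOn f (Set.Icc m M) ∨ AntitoneOn f (Set.Icc m M))
    (A : H →L[ℂ] H) (hA : IsSelfAdjoint A)
    (hA₁ : m • (1 : H →L[ℂ] H) ≤ A) (hA₂ : A ≤ M • (1 : H →L[ℂ] H))
    (φ : (H →L[ℂ] H) →ₗ[ℂ] (K →L[ℂ] K))
    (hφ_pos : ∀ X : H →L[ℂ] H, 0 ≤ X → 0 ≤ φ X)
    (hφ_one : φ 1 = 1)
    (t₀ : ℝ) (ht₀ : t₀ ∈ Set.Ioo m M) (hdiff : DifferentiableAt ℝ f t₀)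
    (hderiv : deriv f t₀ ≠ 0) :
    mpAlpha m M f t₀ • cfc f (φ A) + mpBeta m M f t₀ • 1 ≤ φ (cfc f A) ∧
      mpAlpha m M f t₀ • φ (cfc f A) + mpBeta m M f t₀ • 1 ≤ cfc f (φ A) := by
  have map_le : ∀ {X Y : H →L[ℂ] H}, X ≤ Y → φ X ≤ φ Y := fun {X Y} h => by
    have := hφ_pos (Y - X) (sub_nonneg.2 h)
    rwa [map_sub, sub_nonneg] at this
  have map_affine : ∀ (a b : ℝ) (X : H →L[ℂ] H), φ (a • X + b • 1) = a • φ X + b • 1 := by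
    intro a b X
    rw [map_add, LinearMap.map_smul_of_tower, LinearMap.map_smul_of_tower, hφ_one]
  have map_const : ∀ b : ℝ, φ (b • 1) = b • 1 := fun b => by
    rw [LinearMap.map_smul_of_tower, hφ_one]
  have hB₁ : m • (1 : K →L[ℂ] K) ≤ φ A := map_const m ▸ map_le hA₁
  have hB₂ : φ A ≤ M • (1 : K →L[ℂ] K) := map_const M ▸ map_le hA₂
  -- A linear `φ` is not assumed to preserve adjoints; `φ A` is self-adjoint because `A ≥ m • 1 ≥ 0`.
  have hA_nonneg : 0 ≤ A :=
    (smul_nonneg hm.le (zero_le_one : (0 : H →L[ℂ] H) ≤ 1)).trans hA₁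
  have hB : IsSelfAdjoint (φ A) := IsSelfAdjoint.of_nonneg (hφ_pos A hA_nonneg)
  obtain ⟨hA_lower, hA_chord⟩ := cfc_chord_bounds hmM hf_cont hf_conc hf_mono ht₀ hdiff hderiv hA
    (spectrum_subset_Icc_of_le hA hA₁ hA₂)
  obtain ⟨hB_lower, hB_chord⟩ := cfc_chord_bounds hmM hf_cont hf_conc hf_mono ht₀ hdiff hderiv hB
    (spectrum_subset_Icc_of_le hB hB₁ hB₂)
  have h₁ := map_le hA_lower
  have h₂ := map_le hA_chord
  rw [map_affine] at h₁ h₂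
  rw [map_affine] at h₁
  exact ⟨hB_lower.trans h₂, h₁.trans hB_chord⟩
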